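/- Two-scale compactness in L^p: let 1 < p < ∞ and let E = (ε_n) be a sequence of positive reals tending to 0. If a sequence (u_ε)_{ε∈E} is bounded in L^p(Q_T), then there exist a subsequence E′ of E and a function u ∈ L^p(Q_T × 𝒯 × 𝒴) such that (u_ε)_{ε∈E′} weakly two-scale converges to u in L^p(Q_T). -/

import Mathlib

open MeasureTheory Filter Set

noncomputable section

/-- Points of `ℝ^N`. -/
abbrev Vn (N : ℕ) := Fin N → ℝ

/-- The unit cell `𝒴 = (0,1)^N`. -/
def cellY (N : ℕ) : Set (Vn N) := Set.univ.pi fun _ => Set.Ioo (0:ℝ) 1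

/-- The unit time cell `𝒯 = (0,1)`. -/
def cellT : Set ℝ := Set.Ioo 0 1

/-- `𝒵 = 𝒯 × 𝒴`-periodicity of a function of the fast variables `(τ,y)`. -/
def ZPer {N : ℕ} (w : ℝ → Vn N → ℝ) : Prop :=
  ∀ (τ : ℝ) (y : Vn N) (l : ℤ) (kk : Fin N → ℤ), w (τ + l) (fun i => y i + kk i) = w τ y

/-- Admissible test functions: `ψ ∈ L^{p'}(Q_T; C_per(𝒯×𝒴))`, i.e. `ψ = ψ(t,x,τ,y)`
is jointly continuous, `𝒵`-periodic in `(τ,y)`, and dominated in modulus by an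
`L^{p'}(Q_T)` function of `(t,x)`. -/
structure AdmissibleTest (N : ℕ) (QT : Set (ℝ × Vn N)) (p' : ℝ)
    (ψ : ℝ → Vn N → ℝ → Vn N → ℝ) : Prop where
  cont : Continuous fun q : (ℝ × Vn N) × ℝ × Vn N => ψ q.1.1 q.1.2 q.2.1 q.2.2
  per : ∀ t x, ZPer (ψ t x)
  dom : ∃ h : ℝ × Vn N → ℝ, MemLp h (ENNReal.ofReal p') (volume.restrict QT) ∧
      ∀ t x τ y, |ψ t x τ y| ≤ h (t, x)

/-- Weak two-scale convergence in `L^p(Q_T)` of the sequence `u n` (with scale `ε n`)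
to `u₀ ∈ L^p(Q_T; L^p_per(𝒯×𝒴))` (Definition 3.1 of the paper). -/
def WeakTwoScale (N : ℕ) (QT : Set (ℝ × Vn N)) (p : ℝ) (ε : ℕ → ℝ)
    (u : ℕ → ℝ × Vn N → ℝ) (u₀ : ℝ × Vn N → ℝ → Vn N → ℝ) : Prop :=
  ∀ ψ : ℝ → Vn N → ℝ → Vn N → ℝ, AdmissibleTest N QT (p / (p - 1)) ψ →
    Tendsto (fun n => ∫ q in QT, u n q * ψ q.1 q.2 (q.1 / ε n) (fun i => q.2 i / ε n))
      atTop
      (nhds (∫ q in QT, ∫ τ in cellT, ∫ y in cellY N, u₀ q τ y * ψ q.1 q.2 τ y))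

/-- Strong two-scale convergence in `L^p(Q_T)`: weak two-scale convergence together with
convergence of the `L^p` norms. -/
def StrongTwoScale (N : ℕ) (QT : Set (ℝ × Vn N)) (p : ℝ) (ε : ℕ → ℝ)
    (u : ℕ → ℝ × Vn N → ℝ) (u₀ : ℝ × Vn N → ℝ → Vn N → ℝ) : Prop :=
  WeakTwoScale N QT p ε u u₀ ∧
    Tendsto (fun n => ∫ q in QT, |u n q| ^ p) atTop
      (nhds (∫ q in QT, ∫ τ in cellT, ∫ y in cellY N, |u₀ q τ y| ^ p))


def sgnOf {α : Type*} [MeasurableSpace α] (μ : Measure α) [IsFiniteMeasure μ] (q : ENNReal)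
    [Fact (1 ≤ q)] (hq : q ≠ ⊤) (ℓ : Lp ℝ q μ →L[ℝ] ℝ) : SignedMeasure α where
  measureOf' A := open Classical in
    if h : MeasurableSet A then ℓ (indicatorConstLp q h (measure_ne_top μ A) 1) else 0
  empty' := by simp
  not_measurable' A h := by simp [h]
  m_iUnion' A hA hd := by
    have hU : MeasurableSet (⋃ i, A i) := MeasurableSet.iUnion hA
    simp only [hA, hU, dif_pos]
    have hF : ∀ F : Finset ℕ, MeasurableSet (⋃ i ∈ F, A i) :=
      fun F => Finset.measurableSet_biUnion F (fun i _ => hA i)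
    have key : ∀ F : Finset ℕ,
        ∑ i ∈ F, ℓ (indicatorConstLp q (hA i) (measure_ne_top μ (A i)) 1)
          = ℓ (indicatorConstLp q (hF F) (measure_ne_top μ _) 1) := by
      intro F
      induction F using Finset.induction_on with
      | empty => simp
      | insert a s ha ih =>
        rw [Finset.sum_insert ha, ih, ← map_add]
        congr 1
        rw [← indicatorConstLp_disjoint_union]
        · simp
        · rw [Set.disjoint_iUnion₂_right]
          intro i hi
          exact hd (by rintro rfl; exact ha hi)
    unfold HasSum
    simp_rw [key]
    refine (ℓ.continuous.tendsto _).comp ?_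
    refine tendsto_indicatorConstLp_set hq ?_
    have h1 : ∀ F : Finset ℕ, symmDiff (⋃ i ∈ F, A i) (⋃ i, A i) = (⋃ i, A i) \ ⋃ i ∈ F, A i := by
      intro F
      rw [symmDiff_of_le]
      exact iUnion₂_subset_iUnion _ _
    simp_rw [h1]
    have h2 : ∀ F : Finset ℕ, μ ((⋃ i, A i) \ ⋃ i ∈ F, A i)
        = μ (⋃ i, A i) - ∑ i ∈ F, μ (A i) := by
      intro F
      rw [measure_sdiff (iUnion₂_subset_iUnion _ _) (hF F).nullMeasurableSet (measure_ne_top _ _),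
        measure_biUnion_finset (fun i _ j _ hij => hd hij) (fun i _ => hA i)]
    simp_rw [h2]
    have h3 : HasSum (fun i => μ (A i)) (μ (⋃ i, A i)) := by
      rw [measure_iUnion hd hA]; exact ENNReal.summable.hasSum
    have := ENNReal.Tendsto.sub (tendsto_const_nhds (x := μ (⋃ i, A i)) (f := atTop)) h3
      (Or.inl (measure_ne_top _ _))
    simpa using this

lemma sgnOf_apply {α : Type*} [MeasurableSpace α] (μ : Measure α) [IsFiniteMeasure μ] (q : ENNReal)
    [Fact (1 ≤ q)] (hq : q ≠ ⊤) (ℓ : Lp ℝ q μ →L[ℝ] ℝ) {A : Set α} (hA : MeasurableSet A) :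
    sgnOf μ q hq ℓ A = ℓ (indicatorConstLp q hA (measure_ne_top μ A) 1) := by
  exact dif_pos hA

lemma exists_density {α : Type*} [MeasurableSpace α] (μ : Measure α) [IsFiniteMeasure μ]
    (q : ENNReal)
    [Fact (1 ≤ q)] (hq : q ≠ ⊤) (ℓ : Lp ℝ q μ →L[ℝ] ℝ) :
    ∃ f : α → ℝ, Measurable f ∧ Integrable f μ ∧ ∀ A (hA : MeasurableSet A),
      ℓ (indicatorConstLp q hA (measure_ne_top μ A) 1) = ∫ x in A, f x ∂μ := by
  set s := sgnOf μ q hq ℓ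
  have hac : VectorMeasure.AbsolutelyContinuous s μ.toENNRealVectorMeasure := by
    refine VectorMeasure.AbsolutelyContinuous.mk fun A hA h => ?_
    rw [Measure.toENNRealVectorMeasure_apply_measurable hA] at h
    rw [sgnOf_apply _ _ _ _ hA]
    have : indicatorConstLp q hA (measure_ne_top μ A) (1:ℝ) = 0 := by
      rw [← norm_eq_zero, norm_indicatorConstLp _ hq]
      · have h1 : (1:ENNReal) ≤ q := Fact.out
        have : q.toReal ≠ 0 := by
          simp [ENNReal.toReal_eq_zero_iff, hq]; rintro rfl; simp at h1
        simp [Measure.real, h, this]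
      · rintro rfl; have h1 : (1:ENNReal) ≤ 0 := Fact.out
        simp at h1
    rw [this, map_zero]
  refine ⟨s.rnDeriv μ, s.measurable_rnDeriv μ, s.integrable_rnDeriv μ, fun A hA => ?_⟩
  rw [← sgnOf_apply μ q hq ℓ hA, ← withDensityᵥ_apply (s.integrable_rnDeriv μ) hA,
    SignedMeasure.withDensityᵥ_rnDeriv_eq s μ hac]

lemma clm_ext_ind {α : Type*} [MeasurableSpace α] (μ : Measure α) [IsFiniteMeasure μ]
    (q : ENNReal) [Fact (1 ≤ q)] (hq : q ≠ ⊤) (ℓ m : Lp ℝ q μ →L[ℝ] ℝ)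
    (h : ∀ A (hA : MeasurableSet A), ℓ (indicatorConstLp q hA (measure_ne_top μ A) 1)
      = m (indicatorConstLp q hA (measure_ne_top μ A) 1)) (g : Lp ℝ q μ) : ℓ g = m g := by
  induction g using Lp.induction hq with
  | indicatorConst c hs hμs =>
    rename_i s
    have : (Lp.simpleFunc.indicatorConst q hs hμs.ne c : Lp ℝ q μ)
        = c • indicatorConstLp q hs (measure_ne_top μ s) (1:ℝ) := by
      rw [Lp.simpleFunc.coe_indicatorConst]
      rw [indicatorConstLp, indicatorConstLp, ← MemLp.toLp_const_smul]
      congr 1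
      ext x
      by_cases hx : x ∈ s <;> simp [hx]
    rw [this, map_smul, map_smul, h]
  | add hf hg _ h1 h2 => rw [map_add, map_add, h1, h2]
  | isClosed => exact isClosed_eq ℓ.continuous m.continuous


lemma trunc_bound {α : Type*} [MeasurableSpace α] (μ : Measure α) [IsFiniteMeasure μ]
    (p q : ℝ) (hpq : p.HolderConjugate q) [Fact (1 ≤ ENNReal.ofReal q)]
    (ℓ : Lp ℝ (ENNReal.ofReal q) μ →L[ℝ] ℝ) (f : α → ℝ) (hf : Measurable f)
    (hA : ∀ A (hA : MeasurableSet A),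
      ℓ (indicatorConstLp _ hA (measure_ne_top μ A) 1) = ∫ x in A, f x ∂μ) (k : ℕ) :
    eLpNorm ({x | |f x| ≤ k}.indicator f) (ENNReal.ofReal p) μ ≤ ENNReal.ofReal ‖ℓ‖ := by
  have := hpq.ennrealOfReal
  have : Fact (1 ≤ ENNReal.ofReal p) := ⟨by simpa using hpq.lt.le⟩
  set S : Set α := {x | |f x| ≤ k} with hS
  have hSm : MeasurableSet S := measurableSet_le hf.abs measurable_const
  set F := S.indicator f with hF
  have hFm : Measurable F := hf.indicator hSm
  have hFb : ∀ x, |F x| ≤ k := by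
    intro x
    by_cases hx : x ∈ S
    · rw [hF, indicator_of_mem hx]; exact hx
    · simp [hF, hx]
  have hFp : MemLp F (ENNReal.ofReal p) μ :=
    MemLp.of_bound hFm.aestronglyMeasurable k (ae_of_all _ hFb)
  have hχ : MemLp (S.indicator (fun _ => (1:ℝ))) ⊤ μ :=
    memLp_indicator_const _ hSm _ (Or.inr (measure_ne_top _ _))
  let M : Lp ℝ (ENNReal.ofReal q) μ →L[ℝ] Lp ℝ (ENNReal.ofReal q) μ :=
    (ContinuousLinearMap.mul ℝ ℝ).holderL μ ⊤ (ENNReal.ofReal q) (ENNReal.ofReal q) (hχ.toLp _)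
  have hM : ∀ g, M g =ᵐ[μ] fun x => S.indicator (fun _ => (1:ℝ)) x * g x := by
    intro g
    have h1 := (ContinuousLinearMap.mul ℝ ℝ).coeFn_holder (r := ENNReal.ofReal q) (hχ.toLp _) g
    filter_upwards [h1, hχ.coeFn_toLp] with x h1 h2
    change (ContinuousLinearMap.holder _ _ _ _ : Lp ℝ (ENNReal.ofReal q) μ) x = _
    rw [h1, h2]; rfl
  have hpair : ∀ g : Lp ℝ (ENNReal.ofReal q) μ, ℓ (M g)
      = (ContinuousLinearMap.mul ℝ ℝ).lpPairing μ (ENNReal.ofReal p) (ENNReal.ofReal q) (hFp.toLp _) g := by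
    intro g
    refine clm_ext_ind μ _ ENNReal.ofReal_ne_top (ℓ.comp M) _ ?_ g
    intro A hAm
    rw [ContinuousLinearMap.lpPairing_eq_integral, ContinuousLinearMap.comp_apply]
    have h1 : M (indicatorConstLp _ hAm (measure_ne_top μ A) 1)
        = indicatorConstLp _ (hAm.inter hSm) (measure_ne_top μ _) 1 := by
      apply Lp.ext
      filter_upwards [hM (indicatorConstLp _ hAm (measure_ne_top μ A) 1),
        indicatorConstLp_coeFn (p := ENNReal.ofReal q) (hs := hAm)
          (hμs := measure_ne_top μ A) (c := (1:ℝ)),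
        indicatorConstLp_coeFn (p := ENNReal.ofReal q) (hs := hAm.inter hSm)
          (hμs := measure_ne_top μ _) (c := (1:ℝ))] with x h1 h2 h3
      rw [h1, h2, h3]
      by_cases hx : x ∈ S <;> by_cases hx' : x ∈ A <;> simp [hx, hx']
    rw [h1, hA, ← integral_indicator (hAm.inter hSm)]
    refine integral_congr_ae ?_
    filter_upwards [hFp.coeFn_toLp, indicatorConstLp_coeFn (p := ENNReal.ofReal q) (hs := hAm)
          (hμs := measure_ne_top μ A) (c := (1:ℝ))] with x h1 h2
    rw [h1, h2]
    by_cases hx : x ∈ S <;> by_cases hx' : x ∈ A <;> simp [hx, hx', hF]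
  -- the extremal function
  let G : α → ℝ := fun x => SignType.sign (F x) * |F x| ^ (p - 1)
  have hp1 : 0 < p - 1 := by linarith [hpq.lt]
  have hp0 : 0 < p := hpq.pos
  have hq0 : 0 < q := hpq.symm.pos
  have hGabs : ∀ x, |G x| = |F x| ^ (p - 1) := by
    intro x
    by_cases hx : F x = 0
    · simp [G, hx, Real.zero_rpow hp1.ne']
    · have h0 : 0 ≤ |F x| ^ (p - 1) := by positivity
      rcases lt_or_gt_of_ne hx with h | h
      · simp [G, h, abs_of_nonneg h0]
      · simp [G, h, abs_of_nonneg h0]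
  have hFG : ∀ x, F x * G x = |F x| ^ p := by
    intro x
    by_cases hx : F x = 0
    · simp [hx, Real.zero_rpow hp0.ne']
    · have h0 : |F x| ^ p = |F x| * |F x| ^ (p - 1) := by
        rw [← Real.rpow_one_add' (abs_nonneg _) (by linarith)]; congr 1; ring
      rw [h0]
      rcases lt_or_gt_of_ne hx with h | h
      · simp [G, h, abs_of_neg h]
      · simp [G, h, abs_of_pos h]
  have hGm : Measurable G := by
    have h1 : Measurable fun x => ((SignType.sign (F x) : SignType) : ℝ) := by
      have : Measurable fun y : ℝ => ((SignType.sign y : SignType) : ℝ) := by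
        have : (fun y : ℝ => ((SignType.sign y : SignType) : ℝ))
          = fun y => (Ioi (0:ℝ)).indicator (fun _ => (1:ℝ)) y - (Iio (0:ℝ)).indicator (fun _ => (1:ℝ)) y := by
          ext y
          rcases lt_trichotomy y 0 with h | h | h
          · simp [h, h.le]
          · simp [h]
          · simp [h, h.le]
        rw [this]
        exact (measurable_const.indicator measurableSet_Ioi).sub
          (measurable_const.indicator measurableSet_Iio)
      exact this.comp hFm
    exact h1.mul (hFm.abs.pow_const _)
  have hGq : MemLp G (ENNReal.ofReal q) μ := by
    refine MemLp.of_bound hGm.aestronglyMeasurable ((k:ℝ) ^ (p-1)) (ae_of_all _ fun x => ?_)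
    rw [Real.norm_eq_abs, hGabs]
    exact Real.rpow_le_rpow (abs_nonneg _) (hFb x) hp1.le
  have hMG : M (hGq.toLp G) = hGq.toLp G := by
    apply Lp.ext
    filter_upwards [hM (hGq.toLp G), hGq.coeFn_toLp] with x h1 h2
    rw [h1, h2]
    by_cases hx : x ∈ S
    · simp [hx]
    · simp [hx, G, hF]
  have hq' : (ENNReal.ofReal q).toReal = q := ENNReal.toReal_ofReal hq0.le
  have hp' : (ENNReal.ofReal p).toReal = p := ENNReal.toReal_ofReal hp0.le
  have hI0 : 0 ≤ ∫ x, |F x| ^ p ∂μ := integral_nonneg fun x => by positivity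
  have e1 : ℓ (hGq.toLp G) = ∫ x, |F x| ^ p ∂μ := by
    conv_lhs => rw [← hMG]
    rw [hpair, ContinuousLinearMap.lpPairing_eq_integral]
    refine integral_congr_ae ?_
    filter_upwards [hFp.coeFn_toLp, hGq.coeFn_toLp] with x h1 h2
    rw [h1, h2]; exact hFG x
  have e2 : ‖hGq.toLp G‖ = (∫ x, |F x| ^ p ∂μ) ^ q⁻¹ := by
    rw [Lp.norm_toLp, hGq.eLpNorm_eq_integral_rpow_norm (by simpa using hq0) ENNReal.ofReal_ne_top,
      hq', ENNReal.toReal_ofReal]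
    · congr 2
      ext x
      rw [Real.norm_eq_abs, hGabs, ← Real.rpow_mul (abs_nonneg _)]
      congr 1
      exact hpq.sub_one_mul_conj
    · exact Real.rpow_nonneg (integral_nonneg fun x => by positivity) _
  have e3 : ∫ x, |F x| ^ p ∂μ ≤ ‖ℓ‖ * (∫ x, |F x| ^ p ∂μ) ^ q⁻¹ := by
    rw [← e2, ← e1]
    exact (le_abs_self _).trans (ℓ.le_opNorm _)
  rw [hFp.eLpNorm_eq_integral_rpow_norm (by simpa using hp0) ENNReal.ofReal_ne_top, hp']
  refine ENNReal.ofReal_le_ofReal ?_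
  simp only [Real.norm_eq_abs]
  set I := ∫ x, |F x| ^ p ∂μ
  rcases hI0.eq_or_lt with h | h
  · rw [← h, Real.zero_rpow (inv_ne_zero hp0.ne')]; positivity
  · have h2 : I = I ^ p⁻¹ * I ^ q⁻¹ := by
      rw [← Real.rpow_add h, hpq.inv_add_inv_eq_one, Real.rpow_one]
    have h3 : 0 < I ^ q⁻¹ := Real.rpow_pos_of_pos h _
    nth_rw 1 [h2] at e3
    exact le_of_mul_le_mul_right e3 h3

lemma exists_rep {α : Type*} [MeasurableSpace α] (μ : Measure α) [IsFiniteMeasure μ]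
    (p q : ℝ) (hpq : p.HolderConjugate q) [Fact (1 ≤ ENNReal.ofReal q)]
    (ℓ : Lp ℝ (ENNReal.ofReal q) μ →L[ℝ] ℝ) :
    ∃ f : α → ℝ, Measurable f ∧ MemLp f (ENNReal.ofReal p) μ ∧
      ∀ g (hg : MemLp g (ENNReal.ofReal q) μ), ℓ (hg.toLp g) = ∫ x, f x * g x ∂μ := by
  have := hpq.ennrealOfReal
  have : Fact (1 ≤ ENNReal.ofReal p) := ⟨by simpa using hpq.lt.le⟩
  obtain ⟨f, hfm, hfi, hA⟩ := exists_density μ _ ENNReal.ofReal_ne_top ℓ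
  have hfp : MemLp f (ENNReal.ofReal p) μ := by
    refine ⟨hfm.aestronglyMeasurable, ?_⟩
    refine lt_of_le_of_lt (Lp.eLpNorm_lim_le_liminf_eLpNorm
      (f := fun k : ℕ => {x | |f x| ≤ k}.indicator f) ?_ f ?_)
      (lt_of_le_of_lt ?_ (ENNReal.ofReal_lt_top (r := ‖ℓ‖)))
    · exact fun k => (hfm.indicator (measurableSet_le hfm.abs measurable_const)).aestronglyMeasurable
    · refine ae_of_all _ fun x => ?_
      refine tendsto_const_nhds.congr' ?_
      filter_upwards [eventually_ge_atTop ⌈|f x|⌉₊] with k hk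
      have : |f x| ≤ k := Nat.ceil_le.1 hk
      simp [this]
    · refine liminf_le_of_le (by isBoundedDefault) fun b hb => ?_
      obtain ⟨k, hk⟩ := hb.exists
      exact hk.trans (trunc_bound μ p q hpq ℓ f hfm hA k)
  refine ⟨f, hfm, hfp, fun g hg => ?_⟩
  have := clm_ext_ind μ _ ENNReal.ofReal_ne_top ℓ
    ((ContinuousLinearMap.mul ℝ ℝ).lpPairing μ (ENNReal.ofReal p) (ENNReal.ofReal q) (hfp.toLp _))
    ?_ (hg.toLp g)
  · rw [this, ContinuousLinearMap.lpPairing_eq_integral]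
    refine integral_congr_ae ?_
    filter_upwards [hfp.coeFn_toLp, hg.coeFn_toLp] with x h1 h2
    rw [h1, h2]; rfl
  · intro A hAm
    rw [hA, ContinuousLinearMap.lpPairing_eq_integral, ← integral_indicator hAm]
    refine integral_congr_ae ?_
    filter_upwards [hfp.coeFn_toLp, indicatorConstLp_coeFn (p := ENNReal.ofReal q) (hs := hAm)
          (hμs := measure_ne_top μ A) (c := (1:ℝ))] with x h1 h2
    rw [h1, h2]
    by_cases hx' : x ∈ A <;> simp [hx']

/-- Weak sequential compactness of bounded sequences in `L^p`. -/
lemma weak_Lp_compact {α : Type*} [MeasurableSpace α] (μ : Measure α) [IsFiniteMeasure μ]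
    [IsSeparable μ]
    (p q : ℝ) (hpq : p.HolderConjugate q) (U : ℕ → α → ℝ)
    (hU : ∀ n, MemLp (U n) (ENNReal.ofReal p) μ) (C : ℝ)
    (hC : ∀ n, eLpNorm (U n) (ENNReal.ofReal p) μ ≤ ENNReal.ofReal C) :
    ∃ φ : ℕ → ℕ, StrictMono φ ∧ ∃ f : α → ℝ, Measurable f ∧ MemLp f (ENNReal.ofReal p) μ ∧
      ∀ g, MemLp g (ENNReal.ofReal q) μ →
        Tendsto (fun n => ∫ x, U (φ n) x * g x ∂μ) atTop (nhds (∫ x, f x * g x ∂μ)) := by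
  have := hpq.ennrealOfReal
  have : Fact (1 ≤ ENNReal.ofReal p) := ⟨by simpa using hpq.lt.le⟩
  have : Fact (1 ≤ ENNReal.ofReal q) := ⟨by simpa using hpq.symm.lt.le⟩
  have : Fact (ENNReal.ofReal q ≠ ⊤) := ⟨ENNReal.ofReal_ne_top⟩
  let P := (ContinuousLinearMap.mul ℝ ℝ).lpPairing μ (ENNReal.ofReal p) (ENNReal.ofReal q)
  let m : ℕ → StrongDual ℝ (Lp ℝ (ENNReal.ofReal q) μ) := fun n => P ((hU n).toLp _)
  have hm : ∀ n, m n ∈ Metric.closedBall (0 : StrongDual ℝ (Lp ℝ (ENNReal.ofReal q) μ))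
      (‖P‖ * max C 0) := by
    intro n
    rw [mem_closedBall_zero_iff]
    refine (P.le_opNorm _).trans ?_
    gcongr
    rw [Lp.norm_toLp]
    refine ENNReal.toReal_le_of_le_ofReal (le_max_right _ _) ((hC n).trans ?_)
    exact ENNReal.ofReal_le_ofReal (le_max_left _ _)
  obtain ⟨ℓ, -, φ, hφ, hlim⟩ := WeakDual.isSeqCompact_closedBall ℝ (Lp ℝ (ENNReal.ofReal q) μ)
    0 (‖P‖ * max C 0) (x := fun n => StrongDual.toWeakDual (m n)) (fun n => by
      simpa using hm n)
  obtain ⟨f, hfm, hfp, hf⟩ := exists_rep μ p q hpq (WeakDual.toStrongDual ℓ)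
  refine ⟨φ, hφ, f, hfm, hfp, fun g hg => ?_⟩
  rw [← hf g hg]
  have h1 := ((WeakDual.eval_continuous (hg.toLp g)).tendsto ℓ).comp hlim
  refine h1.congr fun n => ?_
  change P ((hU (φ n)).toLp _) (hg.toLp g) = _
  rw [ContinuousLinearMap.lpPairing_eq_integral]
  refine integral_congr_ae ?_
  filter_upwards [(hU (φ n)).coeFn_toLp, hg.coeFn_toLp] with x h1 h2
  rw [h1, h2]; rfl

/-- Componentwise fractional part. -/
def fr {N : ℕ} (z : ℝ × Vn N) : ℝ × Vn N := (Int.fract z.1, fun i => Int.fract (z.2 i))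

lemma measurable_fr {N : ℕ} : Measurable (fr (N := N)) := by
  unfold fr
  fun_prop

/-- Lebesgue measure on the unit cell. -/
def kap (N : ℕ) : Measure (ℝ × Vn N) := (volume.restrict cellT).prod (volume.restrict (cellY N))

lemma mp_fract (a : ℝ) : MeasurePreserving (fun x : ℝ => Int.fract (x + a))
    (volume.restrict (Ioo (0:ℝ) 1)) (volume.restrict (Ioo (0:ℝ) 1)) := by
  have hm : Measurable (fun x : ℝ => Int.fract (x + a)) := by fun_prop
  refine ⟨hm, ?_⟩
  ext B hB
  rw [Measure.map_apply hm hB, Measure.restrict_apply hB, Measure.restrict_apply (hm hB)]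
  have hA : MeasurableSet (Int.fract ⁻¹' B : Set ℝ) := measurable_fract hB
  set A : Set ℝ := Int.fract ⁻¹' B with hAdef
  have h1 : volume ((fun x : ℝ => Int.fract (x + a)) ⁻¹' B ∩ Ioo 0 1)
      = volume (A ∩ Ioc a (a+1)) := by
    have : (fun x : ℝ => Int.fract (x + a)) ⁻¹' B ∩ Ioc 0 1
        = (fun x => x + a) ⁻¹' (A ∩ Ioc a (a+1)) := by
      ext x
      simp only [hAdef, mem_inter_iff, mem_preimage, mem_Ioc]
      constructor <;> rintro ⟨h, h1, h2⟩ <;> exact ⟨h, by linarith, by linarith⟩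
    rw [← measure_preimage_add_right volume a (A ∩ Ioc a (a+1)), ← this]
    exact measure_congr ((ae_eq_refl _).inter Ioo_ae_eq_Ioc)
  have h2 : volume (B ∩ Ioo 0 1) = volume (A ∩ Ioc 0 (0+1)) := by
    have : B ∩ Ioo 0 1 = A ∩ Ioo 0 1 := by
      ext x
      simp only [hAdef, mem_inter_iff, mem_preimage, mem_Ioo]
      constructor <;> rintro ⟨h, h1, h2⟩
      · exact ⟨by rwa [Int.fract_eq_self.2 ⟨h1.le, h2⟩], h1, h2⟩
      · exact ⟨by rwa [Int.fract_eq_self.2 ⟨h1.le, h2⟩] at h, h1, h2⟩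
    rw [this, zero_add]
    exact measure_congr ((ae_eq_refl _).inter Ioo_ae_eq_Ioc)
  rw [h1, h2]
  refine (isAddFundamentalDomain_Ioc one_pos a).measure_set_eq
    (isAddFundamentalDomain_Ioc one_pos 0) hA ?_
  rintro ⟨g, hg⟩
  obtain ⟨k, rfl⟩ := AddSubgroup.mem_zmultiples_iff.1 hg
  ext x
  simp only [hAdef, mem_preimage]
  have : Int.fract ((⟨k • (1:ℝ), hg⟩ : AddSubgroup.zmultiples (1:ℝ)) +ᵥ x) = Int.fract x := by
    change Int.fract (k • (1:ℝ) + x) = _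
    simp
  rw [this]

instance (N : ℕ) : IsProbabilityMeasure (volume.restrict (cellY N)) := by
  constructor
  simp [cellY, Real.volume_pi_Ioo]

instance : IsProbabilityMeasure (volume.restrict cellT) := by
  constructor
  simp [cellT]

instance (N : ℕ) : IsProbabilityMeasure (kap N) := by unfold kap; infer_instance

lemma mp_fr {N : ℕ} (a : ℝ × Vn N) : MeasurePreserving (fun z => fr (z + a)) (kap N) (kap N) := by
  have hY : MeasurePreserving (fun y : Vn N => fun i => Int.fract (y i + a.2 i))
      (volume.restrict (cellY N)) (volume.restrict (cellY N)) := by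
    have : (volume.restrict (cellY N)) = Measure.pi (fun _ : Fin N => volume.restrict (Ioo (0:ℝ) 1)) := by
      rw [cellY, volume_pi, Measure.restrict_pi_pi]
    rw [this]
    exact measurePreserving_pi _ _ (fun i => mp_fract (a.2 i))
  exact (mp_fract a.1).prod hY

lemma ae_kap {N : ℕ} : ∀ᵐ z ∂(kap N), z ∈ cellT ×ˢ cellY N := by
  have hm : MeasurableSet (cellT ×ˢ cellY N) :=
    measurableSet_Ioo.prod (MeasurableSet.univ_pi fun _ => measurableSet_Ioo)
  rw [kap, Measure.prod_restrict]
  exact ae_restrict_mem hm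

lemma fr_of_mem {N : ℕ} {z : ℝ × Vn N} (hz : z ∈ cellT ×ˢ cellY N) : fr z = z := by
  obtain ⟨h1, h2⟩ := hz
  refine Prod.ext (Int.fract_eq_self.2 ⟨h1.1.le, h1.2⟩) (funext fun i => ?_)
  have := h2 i (mem_univ i)
  exact Int.fract_eq_self.2 ⟨this.1.le, this.2⟩

lemma fr_cancel {N : ℕ} (a s : ℝ × Vn N) : fr (fr a - a + s) = fr s := by
  have h : ∀ x y : ℝ, Int.fract (Int.fract x - x + y) = Int.fract y := by
    intro x y
    have : Int.fract x - x + y = y - (⌊x⌋ : ℤ) := by rw [← Int.self_sub_floor]; ring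
    rw [this, Int.fract_sub_intCast]
  exact Prod.ext (h _ _) (funext fun i => h _ _)

instance (N : ℕ) : (volume : Measure (ℝ × Vn N)).IsAddRightInvariant :=
  inferInstanceAs ((volume : Measure ℝ).prod (volume : Measure (Vn N))).IsAddRightInvariant

/-- The shift map `(q,s) ↦ (q - ε s, q/ε mod 1)` preserves `dq ⊗ dz`. -/
lemma mp_shift {N : ℕ} (e : ℝ) (he : e ≠ 0) :
    MeasurePreserving (fun w : (ℝ × Vn N) × (ℝ × Vn N) => (w.1 - e • w.2, fr (e⁻¹ • w.1)))
      ((volume : Measure (ℝ × Vn N)).prod (kap N)) ((volume : Measure (ℝ × Vn N)).prod (kap N)) := by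
  have hT : MeasurePreserving (fun w : (ℝ × Vn N) × (ℝ × Vn N) => (w.1, fr (w.2 + e⁻¹ • w.1)))
      ((volume : Measure (ℝ × Vn N)).prod (kap N)) ((volume : Measure (ℝ × Vn N)).prod (kap N)) := by
    refine (MeasurePreserving.id volume).skew_product (g := fun q s => fr (s + e⁻¹ • q)) ?_ ?_
    · exact measurable_fr.comp (by fun_prop)
    · exact ae_of_all _ fun q => (mp_fr _).map_eq
  have hS' : MeasurePreserving (fun w : (ℝ × Vn N) × (ℝ × Vn N) => (w.1, w.2 - e • w.1))
      ((kap N).prod volume) ((kap N).prod (volume : Measure (ℝ × Vn N))) := by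
    refine (MeasurePreserving.id (kap N)).skew_product (g := fun s q => q - e • s) (by fun_prop) ?_
    exact ae_of_all _ fun s => (measurePreserving_sub_right volume _).map_eq
  have hsw1 := Measure.measurePreserving_swap (μ := (volume : Measure (ℝ × Vn N))) (ν := kap N)
  have hsw2 := Measure.measurePreserving_swap (μ := kap N) (ν := (volume : Measure (ℝ × Vn N)))
  have h := hT.comp (hsw2.comp (hS'.comp hsw1))
  convert h using 1
  ext1 w
  simp only [Function.comp, Prod.swap]
  congr 2
  rw [smul_sub, smul_smul, inv_mul_cancel₀ he, one_smul]
  abel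

/-- Unfolding. -/
def unf {N : ℕ} (e : ℝ) (v : ℝ × Vn N → ℝ) (w : (ℝ × Vn N) × (ℝ × Vn N)) : ℝ :=
  v (w.1 + e • fr (w.2 - e⁻¹ • w.1))

lemma measurable_unf {N : ℕ} (e : ℝ) {v : ℝ × Vn N → ℝ} (hv : Measurable v) :
    Measurable (unf e v) := by
  refine hv.comp ?_
  refine measurable_fst.add (Measurable.const_smul (measurable_fr.comp ?_) e)
  fun_prop

lemma unf_shift {N : ℕ} (e : ℝ) (he : e ≠ 0) (v : ℝ × Vn N → ℝ) {w : (ℝ × Vn N) × (ℝ × Vn N)}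
    (hw : w.2 ∈ cellT ×ˢ cellY N) :
    unf e v (w.1 - e • w.2, fr (e⁻¹ • w.1)) = v w.1 := by
  unfold unf
  congr 1
  have : fr (e⁻¹ • w.1) - e⁻¹ • (w.1 - e • w.2) = fr (e⁻¹ • w.1) - e⁻¹ • w.1 + w.2 := by
    rw [smul_sub, smul_smul, inv_mul_cancel₀ he, one_smul]
    abel
  simp only [this, fr_cancel, fr_of_mem hw]
  abel

lemma unf_shift_ae {N : ℕ} (e : ℝ) (he : e ≠ 0) (v : ℝ × Vn N → ℝ) :
    ∀ᵐ w ∂((volume : Measure (ℝ × Vn N)).prod (kap N)),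
      unf e v (w.1 - e • w.2, fr (e⁻¹ • w.1)) = v w.1 := by
  have : ∀ᵐ w ∂((volume : Measure (ℝ × Vn N)).prod (kap N)), w.2 ∈ cellT ×ˢ cellY N :=
    Measure.quasiMeasurePreserving_snd.ae ae_kap
  filter_upwards [this] with w hw
  exact unf_shift e he v hw

lemma eLpNorm_unf {N : ℕ} (e : ℝ) (he : e ≠ 0) {v : ℝ × Vn N → ℝ} (hv : Measurable v)
    (p : ENNReal) : eLpNorm (unf e v) p ((volume : Measure (ℝ × Vn N)).prod (kap N))
      = eLpNorm v p volume := by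
  rw [← eLpNorm_comp_measurePreserving (measurable_unf e hv).aestronglyMeasurable (mp_shift e he)]
  rw [← eLpNorm_comp_measurePreserving (μ := (volume : Measure (ℝ × Vn N)).prod (kap N)) (f := Prod.fst)
    hv.aestronglyMeasurable measurePreserving_fst]
  exact eLpNorm_congr_ae (unf_shift_ae e he v)

lemma integral_unf {N : ℕ} (e : ℝ) (he : e ≠ 0) {v : ℝ × Vn N → ℝ} (hv : Measurable v)
    {g : (ℝ × Vn N) × (ℝ × Vn N) → ℝ} (hg : Measurable g) :
    ∫ w, unf e v w * g w ∂((volume : Measure (ℝ × Vn N)).prod (kap N))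
      = ∫ w, v w.1 * g (w.1 - e • w.2, fr (e⁻¹ • w.1))
        ∂((volume : Measure (ℝ × Vn N)).prod (kap N)) := by
  have h := mp_shift (N := N) e he
  conv_lhs => rw [← h.map_eq]
  rw [integral_map (f := fun w => unf e v w * g w) h.measurable.aemeasurable
    ((measurable_unf e hv).mul hg).aestronglyMeasurable]
  refine integral_congr_ae ?_
  filter_upwards [unf_shift_ae e he v] with w hw
  rw [hw]

lemma fr_mem_cube {N : ℕ} (z : ℝ × Vn N) :
    fr z ∈ (Icc (0:ℝ) 1) ×ˢ (Set.univ.pi fun _ : Fin N => Icc (0:ℝ) 1) :=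
  ⟨⟨Int.fract_nonneg _, (Int.fract_lt_one _).le⟩,
    fun _ _ => ⟨Int.fract_nonneg _, (Int.fract_lt_one _).le⟩⟩

lemma compact_cube {N : ℕ} :
    IsCompact ((Icc (0:ℝ) 1) ×ˢ (Set.univ.pi fun _ : Fin N => Icc (0:ℝ) 1)) :=
  isCompact_Icc.prod (isCompact_univ_pi fun _ => isCompact_Icc)

lemma zper_fr {N : ℕ} {w : ℝ → Vn N → ℝ} (hw : ZPer w) (z : ℝ × Vn N) :
    w (fr z).1 (fr z).2 = w z.1 z.2 := by
  rw [← hw (fr z).1 (fr z).2 ⌊z.1⌋ (fun i => ⌊z.2 i⌋)]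
  simp [fr]

/-- The core comparison: the oscillating integral and the unfolded integral have the same limit. -/
lemma core_limit {N : ℕ} (S : Set (ℝ × Vn N)) (hSo : IsOpen S) (hSb : Bornology.IsBounded S)
    (p q : ℝ) (hpq : p.HolderConjugate q) (ε : ℕ → ℝ) (hεpos : ∀ n, 0 < ε n)
    (hεlim : Tendsto ε atTop (nhds 0)) (v : ℕ → ℝ × Vn N → ℝ) (hv : ∀ n, Measurable (v n))
    (hv0 : ∀ n x, x ∉ S → v n x = 0)
    (hvp : ∀ n, MemLp (v n) (ENNReal.ofReal p) volume)
    (C : ℝ) (hC : ∀ n, ∫ x, |v n x| ^ p ≤ C)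
    (g : (ℝ × Vn N) × (ℝ × Vn N) → ℝ) (hg : Continuous g) (M : ℝ)
    (hM : ∀ x ∈ S, ∀ z, |g (x, fr z)| ≤ M) :
    Tendsto (fun n => (∫ x in S, v n x * g (x, fr ((ε n)⁻¹ • x)))
      - ∫ w, unf (ε n) (v n) w * g w ∂((volume.restrict S).prod (kap N))) atTop (nhds 0) := by
  have hSm : MeasurableSet S := hSo.measurableSet
  have : IsFiniteMeasure (volume.restrict S) := ⟨by simpa using hSb.measure_lt_top⟩
  set lam := (volume.restrict S).prod (kap N) with hlam
  have hp0 : 0 < p := hpq.pos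
  have hq0 : 0 < q := hpq.symm.pos
  have hlam' : lam = ((volume : Measure (ℝ × Vn N)).prod (kap N)).restrict (S ×ˢ univ) := by
    rw [hlam, ← Measure.prod_restrict, Measure.restrict_univ]
  let D : ℕ → (ℝ × Vn N) × (ℝ × Vn N) → ℝ := fun n w =>
    g (w.1, fr ((ε n)⁻¹ • w.1))
      - S.indicator (fun _ => (1:ℝ)) (w.1 - ε n • w.2) * g (w.1 - ε n • w.2, fr ((ε n)⁻¹ • w.1))
  have hfrm : ∀ n, Measurable (fun w : (ℝ × Vn N) × (ℝ × Vn N) => fr ((ε n)⁻¹ • w.1)) := fun n =>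
    measurable_fr.comp (by fun_prop)
  have hDm : ∀ n, Measurable (D n) := by
    intro n
    refine (hg.measurable.comp (measurable_fst.prodMk (hfrm n))).sub
      (Measurable.mul ?_ (hg.measurable.comp (Measurable.prodMk (by fun_prop) (hfrm n))))
    exact (measurable_const.indicator hSm).comp (by fun_prop)
  have hS : ∀ᵐ w ∂lam, w.1 ∈ S :=
    Measure.quasiMeasurePreserving_fst.ae (ae_restrict_mem hSm)
  have hDb : ∀ n, ∀ᵐ w ∂lam, ‖D n w‖ ≤ M + M := by
    intro n
    filter_upwards [hS] with w hw
    have h1 := hM w.1 hw ((ε n)⁻¹ • w.1)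
    refine (norm_sub_le _ _).trans (add_le_add h1 ?_)
    by_cases h : w.1 - ε n • w.2 ∈ S
    · simpa [h] using hM _ h ((ε n)⁻¹ • w.1)
    · simpa [h] using (abs_nonneg _).trans h1
  have hDq : ∀ n, MemLp (D n) (ENNReal.ofReal q) lam := fun n =>
    MemLp.of_bound (hDm n).aestronglyMeasurable _ (hDb n)
  -- pointwise convergence
  have hDlim : ∀ᵐ w ∂lam, Tendsto (fun n => D n w) atTop (nhds 0) := by
    filter_upwards [hS] with w hw
    have hto : Tendsto (fun n => w.1 - ε n • w.2) atTop (nhds w.1) := by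
      have := (tendsto_const_nhds (x := w.1)).sub (hεlim.smul_const w.2)
      simpa using this
    rw [Metric.tendsto_nhds]
    intro δ hδ
    have hun : ∀ᶠ x in nhds w.1, ∀ z ∈ (Icc (0:ℝ) 1) ×ˢ (Set.univ.pi fun _ : Fin N => Icc (0:ℝ) 1),
        |g (w.1, z) - g (x, z)| < δ := by
      refine compact_cube.eventually_forall_of_forall_eventually fun z _ => ?_
      have hc : Continuous fun y : (ℝ × Vn N) × (ℝ × Vn N) => |g (w.1, y.2) - g (y.1, y.2)| := by
        fun_prop
      exact hc.continuousAt.eventually_lt continuousAt_const (by simpa using hδ)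
    filter_upwards [hto.eventually hun, hto.eventually (hSo.mem_nhds hw)] with n h1 h2
    have := h1 _ (fr_mem_cube ((ε n)⁻¹ • w.1))
    have h3 : w.1 - ε n • w.2 ∈ S := h2
    rw [Real.dist_eq, sub_zero]
    simp only [D]
    rw [indicator_of_mem h3, one_mul]
    exact this
  have hDint : Tendsto (fun n => ∫ w, ‖D n w‖ ^ q ∂lam) atTop (nhds 0) := by
    have h := tendsto_integral_of_dominated_convergence (μ := lam)
      (F := fun n w => ‖D n w‖ ^ q) (f := fun _ => (0:ℝ)) (fun _ => (M + M) ^ q)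
      (fun n => ((hDm n).norm.pow_const q).aestronglyMeasurable) (integrable_const _)
      (fun n => by
        filter_upwards [hDb n] with w hw
        rw [Real.norm_of_nonneg (by positivity)]
        exact Real.rpow_le_rpow (norm_nonneg _) hw hq0.le)
      (by
        filter_upwards [hDlim] with w hw
        have := (hw.norm).rpow_const (p := q) (Or.inr hq0.le)
        simpa [Real.zero_rpow hq0.ne'] using this)
    simpa using h
  have hvlam : ∀ n, MemLp (fun w : (ℝ × Vn N) × (ℝ × Vn N) => v n w.1) (ENNReal.ofReal p) lam := by
    intro n
    exact ((hvp n).mono_measure Measure.restrict_le_self).comp_measurePreserving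
      (measurePreserving_fst (μ := volume.restrict S) (ν := kap N))
  have hvC : ∀ n, ∫ w, ‖v n w.1‖ ^ p ∂lam ≤ C := by
    intro n
    have h1 := integral_fun_fst (μ := volume.restrict S) (ν := kap N) (fun x => ‖v n x‖ ^ p)
    simp only [Measure.real, measure_univ, ENNReal.toReal_one, one_smul] at h1
    rw [hlam, h1]
    have h2 : ∫ x in S, ‖v n x‖ ^ p = ∫ x, |v n x| ^ p := by
      refine setIntegral_eq_integral_of_forall_compl_eq_zero fun x hx => ?_
      simp [hv0 n x hx, Real.zero_rpow hp0.ne']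
    rw [h2]; exact hC n
  have hC0 : 0 ≤ C := (integral_nonneg fun x => by positivity).trans (hC 0)
  -- the identity
  have hid : ∀ n, (∫ x in S, v n x * g (x, fr ((ε n)⁻¹ • x)))
      - ∫ w, unf (ε n) (v n) w * g w ∂lam = ∫ w, v n w.1 * D n w ∂lam := by
    intro n
    have e1 : (∫ x in S, v n x * g (x, fr ((ε n)⁻¹ • x)))
        = ∫ w, v n w.1 * g (w.1, fr ((ε n)⁻¹ • w.1)) ∂lam := by
      have h1 := integral_fun_fst (μ := volume.restrict S) (ν := kap N)
        (fun x => v n x * g (x, fr ((ε n)⁻¹ • x)))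
      simp only [Measure.real, measure_univ, ENNReal.toReal_one, one_smul] at h1
      exact h1.symm
    have e2 : ∫ w, unf (ε n) (v n) w * g w ∂lam
        = ∫ w, v n w.1 * (S.indicator (fun _ => (1:ℝ)) (w.1 - ε n • w.2)
          * g (w.1 - ε n • w.2, fr ((ε n)⁻¹ • w.1))) ∂lam := by
      have h1 := integral_unf (ε n) (hεpos n).ne' (hv n)
        (g := fun w => S.indicator (fun _ => (1:ℝ)) w.1 * g w)
        (((measurable_const.indicator hSm).comp measurable_fst).mul hg.measurable)
      have hSu : MeasurableSet (S ×ˢ (univ : Set (ℝ × Vn N))) := hSm.prod MeasurableSet.univ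
      have h2 : ∫ w, unf (ε n) (v n) w * g w ∂lam
          = ∫ w, unf (ε n) (v n) w * (S.indicator (fun _ => (1:ℝ)) w.1 * g w)
            ∂((volume : Measure (ℝ × Vn N)).prod (kap N)) := by
        rw [hlam', ← integral_indicator hSu]
        congr 1
        ext w
        by_cases hw : w.1 ∈ S
        · rw [indicator_of_mem (by exact ⟨hw, trivial⟩)]; simp [hw]
        · rw [indicator_of_notMem (fun h => hw h.1)]; simp [hw]
      rw [h2, h1]
      rw [hlam']
      refine (setIntegral_eq_integral_of_forall_compl_eq_zero fun w hw => ?_).symm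
      rw [hv0 n w.1 (fun h => hw ⟨h, trivial⟩), zero_mul]
    have hb1 : MemLp (fun w : (ℝ × Vn N) × (ℝ × Vn N) => g (w.1, fr ((ε n)⁻¹ • w.1)))
        (ENNReal.ofReal q) lam := by
      refine MemLp.of_bound (hg.measurable.comp
        (measurable_fst.prodMk (hfrm n))).aestronglyMeasurable M ?_
      filter_upwards [hS] with w hw
      exact hM _ hw _
    have hcj := hpq.ennrealOfReal
    have i1 := (hvlam n).integrable_mul hb1
    have i2 := (hvlam n).integrable_mul (hb1.sub (hDq n))
    rw [e1, e2, ← integral_sub]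
    · congr 1
      ext w
      simp only [D]; ring
    · exact i1
    · refine i2.congr (ae_of_all _ fun w => ?_)
      simp [D]
  rw [tendsto_zero_iff_norm_tendsto_zero]
  have hup : Tendsto (fun n => C ^ (1/p) * (∫ w, ‖D n w‖ ^ q ∂lam) ^ (1/q)) atTop (nhds 0) := by
    have h := (hDint.rpow_const (p := 1/q) (Or.inr (by positivity))).const_mul (C ^ (1/p))
    rwa [Real.zero_rpow (by positivity), mul_zero] at h
  refine squeeze_zero (fun _ => norm_nonneg _) (fun n => ?_) hup
  rw [hid]
  refine (norm_integral_le_integral_norm _).trans ?_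
  simp only [norm_mul]
  refine (integral_mul_norm_le_Lp_mul_Lq hpq (hvlam n) (hDq n)).trans ?_
  gcongr
  exact hvC n

/-- Theorem 3.2, two-scale compactness in `L^p`: if `1 < p < ∞`,
`ε_n → 0⁺`, and `(u_{ε_n})` is bounded in `L^p(Q_T)`, then there is a subsequence and a
function `u ∈ L^p(Q_T × 𝒯 × 𝒴)` (extended `𝒵`-periodically) such that the subsequence
weakly two-scale converges to `u` in `L^p(Q_T)`. -/
theorem two_scale_compactness
    (N : ℕ) (Q : Set (Vn N)) (hQo : IsOpen Q) (hQb : Bornology.IsBounded Q)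
    (T : ℝ) (hT : 0 < T) (p : ℝ) (hp1 : 1 < p)
    (ε : ℕ → ℝ) (hεpos : ∀ n, 0 < ε n) (hεlim : Tendsto ε atTop (nhds 0))
    (u : ℕ → ℝ × Vn N → ℝ)
    (humeas : ∀ n, AEStronglyMeasurable (u n) (volume.restrict (Set.Ioo 0 T ×ˢ Q)))
    (huint : ∀ n, IntegrableOn (fun q => |u n q| ^ p) (Set.Ioo 0 T ×ˢ Q) volume)
    (hubdd : ∃ C : ℝ, ∀ n, (∫ q in Set.Ioo 0 T ×ˢ Q, |u n q| ^ p) ≤ C) :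
    ∃ φ : ℕ → ℕ, StrictMono φ ∧
    ∃ u₀ : ℝ × Vn N → ℝ → Vn N → ℝ,
      (∀ q, ZPer (u₀ q)) ∧
      IntegrableOn
        (fun z : (ℝ × Vn N) × ℝ × Vn N => |u₀ z.1 z.2.1 z.2.2| ^ p)
        ((Set.Ioo 0 T ×ˢ Q) ×ˢ cellT ×ˢ cellY N) volume ∧
      WeakTwoScale N (Set.Ioo 0 T ×ˢ Q) p (fun n => ε (φ n)) (fun n => u (φ n)) u₀ := by
  set S : Set (ℝ × Vn N) := Set.Ioo 0 T ×ˢ Q with hSdef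
  have hSo : IsOpen S := isOpen_Ioo.prod hQo
  have hSm : MeasurableSet S := hSo.measurableSet
  have hSb : Bornology.IsBounded S := (Metric.isBounded_Ioo 0 T).prod hQb
  have hfin : IsFiniteMeasure (volume.restrict S) := ⟨by simpa using hSb.measure_lt_top⟩
  obtain ⟨C, hC⟩ := hubdd
  have hpq : p.HolderConjugate (p / (p - 1)) := Real.HolderConjugate.conjExponent hp1
  set q := p / (p - 1) with hq
  have hp0 : 0 < p := hpq.pos
  have hq0 : 0 < q := hpq.symm.pos
  have hp' : (ENNReal.ofReal p).toReal = p := ENNReal.toReal_ofReal hp0.le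
  -- measurable representatives vanishing outside `S`
  let v : ℕ → ℝ × Vn N → ℝ := fun n => S.indicator ((humeas n).mk (u n))
  have hv : ∀ n, Measurable (v n) := fun n =>
    (humeas n).stronglyMeasurable_mk.measurable.indicator hSm
  have hv0 : ∀ n x, x ∉ S → v n x = 0 := fun n x hx => indicator_of_notMem hx _
  have hvu : ∀ n, v n =ᵐ[volume.restrict S] u n := by
    intro n
    filter_upwards [(humeas n).ae_eq_mk, ae_restrict_mem hSm] with x h1 h2
    simp only [v]
    rw [indicator_of_mem h2, ← h1]
  have hvI : ∀ n, ∫ x, |v n x| ^ p = ∫ x in S, |u n x| ^ p := by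
    intro n
    rw [← setIntegral_eq_integral_of_forall_compl_eq_zero (s := S) (fun x hx => by
      simp [hv0 n x hx, Real.zero_rpow hp0.ne'])]
    refine integral_congr_ae ?_
    filter_upwards [hvu n] with x hx
    rw [hx]
  have hvp : ∀ n, MemLp (v n) (ENNReal.ofReal p) volume := by
    intro n
    rw [← integrable_norm_rpow_iff (hv n).aestronglyMeasurable (by simpa using hp0)
      ENNReal.ofReal_ne_top, hp', ← integrableOn_iff_integrable_of_support_subset (s := S)]
    · refine (huint n).congr ?_
      filter_upwards [hvu n] with x hx
      rw [hx, Real.norm_eq_abs]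
    · intro x hx
      by_contra h
      exact hx (by simp [hv0 n x h, Real.zero_rpow hp0.ne'])
  set lam := (volume.restrict S).prod (kap N) with hlam
  have hlamle : lam ≤ (volume : Measure (ℝ × Vn N)).prod (kap N) := by
    have : lam = ((volume : Measure (ℝ × Vn N)).prod (kap N)).restrict (S ×ˢ univ) := by
      rw [hlam, ← Measure.prod_restrict, Measure.restrict_univ]
    rw [this]; exact Measure.restrict_le_self
  let U : ℕ → (ℝ × Vn N) × (ℝ × Vn N) → ℝ := fun n => unf (ε n) (v n)
  have hUn : ∀ n, eLpNorm (U n) (ENNReal.ofReal p) lam ≤ eLpNorm (v n) (ENNReal.ofReal p) volume := by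
    intro n
    rw [← eLpNorm_unf (ε n) (hεpos n).ne' (hv n)]
    exact eLpNorm_mono_measure _ hlamle
  have hU : ∀ n, MemLp (U n) (ENNReal.ofReal p) lam := fun n =>
    ⟨(measurable_unf _ (hv n)).aestronglyMeasurable, (hUn n).trans_lt (hvp n).2⟩
  have hUC : ∀ n, eLpNorm (U n) (ENNReal.ofReal p) lam ≤ ENNReal.ofReal (C ^ p⁻¹) := by
    intro n
    refine (hUn n).trans ?_
    rw [(hvp n).eLpNorm_eq_integral_rpow_norm (by simpa using hp0) ENNReal.ofReal_ne_top, hp']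
    refine ENNReal.ofReal_le_ofReal (Real.rpow_le_rpow ?_ ?_ (by positivity))
    · exact integral_nonneg fun x => by positivity
    · exact (hvI n).trans_le (hC n)
  have hcg : MeasurableSpace.CountablyGenerated ((ℝ × Vn N) × (ℝ × Vn N)) := inferInstance
  have hfl : IsFiniteMeasure lam := by rw [hlam]; infer_instance
  have hsep : MeasureTheory.IsSeparable lam := inferInstance
  obtain ⟨φ, hφ, f, hfm, hfp, hlim⟩ := weak_Lp_compact lam p q hpq U hU _ hUC
  have hcell : ∀ᵐ w ∂lam, w.2 ∈ cellT ×ˢ cellY N :=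
    Measure.quasiMeasurePreserving_snd.ae ae_kap
  have hvol : (volume : Measure ((ℝ × Vn N) × ℝ × Vn N)).restrict (S ×ˢ cellT ×ˢ cellY N) = lam := by
    rw [hlam, kap, Measure.prod_restrict, Measure.prod_restrict]; rfl
  refine ⟨φ, hφ, fun x τ y => f (x, fr (τ, y)), ?_, ?_, ?_⟩
  · intro x τ y l kk
    simp [fr]
  · rw [IntegrableOn, hvol]
    have h1 := hfp.integrable_norm_rpow (by simpa using hp0) ENNReal.ofReal_ne_top
    rw [hp'] at h1
    refine h1.congr ?_
    filter_upwards [hcell] with w hw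
    have : fr (w.2.1, w.2.2) = w.2 := fr_of_mem hw
    simp only [this, Real.norm_eq_abs]
  · intro ψ hψ
    let g : (ℝ × Vn N) × (ℝ × Vn N) → ℝ := fun w => ψ w.1.1 w.1.2 w.2.1 w.2.2
    have hg : Continuous g := hψ.cont
    have hgper : ∀ x z, g (x, fr z) = g (x, z) := fun x z => zper_fr (hψ.per x.1 x.2) z
    obtain ⟨M, hM⟩ : ∃ M, ∀ x ∈ S, ∀ z, |g (x, fr z)| ≤ M := by
      have hK : IsCompact (closure S ×ˢ
          ((Icc (0:ℝ) 1) ×ˢ (Set.univ.pi fun _ : Fin N => Icc (0:ℝ) 1))) :=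
        hSb.isCompact_closure.prod compact_cube
      obtain ⟨M, hM⟩ := hK.exists_bound_of_continuousOn hg.continuousOn
      exact ⟨M, fun x hx z => hM _ ⟨subset_closure hx, fr_mem_cube z⟩⟩
    have hgq : MemLp g (ENNReal.ofReal q) lam := by
      refine MemLp.of_bound hg.measurable.aestronglyMeasurable M ?_
      have hS : ∀ᵐ w ∂lam, w.1 ∈ S :=
        Measure.quasiMeasurePreserving_fst.ae (ae_restrict_mem hSm)
      filter_upwards [hS] with w hw
      have := hM w.1 hw w.2
      rwa [hgper] at this
    have h1 := hlim g hgq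
    have h2 := core_limit S hSo hSb p q hpq (fun n => ε (φ n)) (fun n => hεpos _)
      (hεlim.comp hφ.tendsto_atTop) (fun n => v (φ n)) (fun n => hv _) (fun n => hv0 _)
      (fun n => hvp _) C (fun n => (hvI _).trans_le (hC _)) g hg M hM
    have h3 := h2.add h1
    have hcj := hpq.ennrealOfReal
    have hIfg : Integrable (fun w => f w * g w) lam := hfp.integrable_mul hgq
    have e1 : ∫ w, f w * g w ∂lam
        = ∫ x in S, ∫ τ in cellT, ∫ y in cellY N, f (x, fr (τ, y)) * ψ x.1 x.2 τ y := by
      have hIfg' : Integrable (fun w : (ℝ × Vn N) × (ℝ × Vn N) => f (w.1, fr w.2) * g w) lam := by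
        refine hIfg.congr ?_
        filter_upwards [hcell] with w hw
        rw [fr_of_mem hw]
      have : ∫ w, f w * g w ∂lam = ∫ w, f (w.1, fr w.2) * g w ∂lam := by
        refine integral_congr_ae ?_
        filter_upwards [hcell] with w hw
        rw [fr_of_mem hw]
      rw [this, integral_prod _ hIfg']
      refine integral_congr_ae ?_
      filter_upwards [hIfg'.prod_right_ae] with x hx
      exact integral_prod _ hx
    rw [zero_add, e1] at h3
    refine h3.congr fun n => ?_
    simp only [U]
    rw [sub_add_cancel]
    refine integral_congr_ae ?_
    filter_upwards [hvu (φ n)] with x hx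
    rw [hx, hgper]
    simp only [g]
    congr 2
    · simp [div_eq_inv_mul]
    · ext i; simp [div_eq_inv_mul]
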